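/- Let μ be a measure, 2 ≤ p < ∞, and let x, y ∈ L^p(μ) with x Birkhoff–James orthogonal to y (i.e., ‖x + βy‖_{L^p} ≥ ‖x‖_{L^p} for every scalar β ∈ ℂ). Then ‖x + y‖_{L^p}^2 ≤ ‖x‖_{L^p}^2 + (p − 1)·‖y‖_{L^p}^2. -/

import Mathlib

open MeasureTheory

lemma aux_powmean (p : ℝ) (hp : 2 < p) (a b : ℝ) (ha : 0 < a) (hb : 0 < b) :
    (a ^ (p - 2) + b ^ (p - 2)) / 2 ≤ ((a ^ p + b ^ p) / 2) ^ (1 - 2 / p) := by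
  have hr : 1 ≤ p / (p - 2) := by rw [le_div_iff₀ (by linarith)]; linarith
  have h := (convexOn_rpow hr).2 (Set.mem_Ici.2 (Real.rpow_nonneg ha.le (p-2)))
    (Set.mem_Ici.2 (Real.rpow_nonneg hb.le (p-2))) (by norm_num : (0:ℝ) ≤ 1/2)
    (by norm_num : (0:ℝ) ≤ 1/2) (by norm_num)
  simp only [smul_eq_mul] at h
  have e : (p - 2) * (p / (p - 2)) = p := by
    have : p - 2 ≠ 0 := by linarith
    field_simp
  rw [← Real.rpow_mul ha.le, ← Real.rpow_mul hb.le, e] at h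
  have hpos : 0 ≤ (1/2 * a ^ (p-2) + 1/2 * b ^ (p-2)) := by positivity
  have h2 := Real.rpow_le_rpow (Real.rpow_nonneg hpos _) h
    (by rw [sub_nonneg, div_le_one (by linarith)]; linarith : 0 ≤ 1 - 2/p)
  rw [← Real.rpow_mul hpos] at h2
  have e2 : p / (p - 2) * (1 - 2 / p) = 1 := by
    have : p - 2 ≠ 0 := by linarith
    have : p ≠ 0 := by linarith
    field_simp
  rw [e2, Real.rpow_one] at h2
  convert h2 using 1 <;> ring_nf

lemma aux_dF (p t : ℝ) (h0 : -1 < t) (h1 : t < 1) :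
    HasDerivAt (fun t : ℝ => ((1+t)^p + (1-t)^p)/2)
      (p / 2 * ((1+t)^(p-1) - (1-t)^(p-1))) t := by
  have h1 := ((hasDerivAt_id t).const_add 1).rpow_const (p := p)
    (Or.inl (by simp; linarith))
  have h2 := ((hasDerivAt_id t).const_sub 1).rpow_const (p := p)
    (Or.inl (by simp; linarith))
  refine ((h1.add h2).div_const 2).congr_deriv ?_
  simp only [id]
  ring

lemma aux_dD (p t : ℝ) (h0 : -1 < t) (h1 : t < 1) :
    HasDerivAt (fun t : ℝ => (1+t)^(p-1) - (1-t)^(p-1))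
      ((p - 1) * ((1+t)^(p-2) + (1-t)^(p-2))) t := by
  have h1 := ((hasDerivAt_id t).const_add 1).rpow_const (p := p-1)
    (Or.inl (by simp; linarith))
  have h2 := ((hasDerivAt_id t).const_sub 1).rpow_const (p := p-1)
    (Or.inl (by simp; linarith))
  refine (h1.sub h2).congr_deriv ?_
  simp only [id]
  rw [show p - 1 - 1 = p - 2 by ring]
  ring

lemma aux_one (p : ℝ) (hp : 2 < p) (t : ℝ) (ht0 : 0 ≤ t) (ht1 : t ≤ 1) :
    (((1+t)^p + (1-t)^p)/2) ^ (2/p) ≤ 1 + (p-1) * t^2 := by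
  have Fpos : ∀ s : ℝ, 0 ≤ s → s ≤ 1 → 0 < ((1+s)^p + (1-s)^p)/2 := by
    intro s h0 h1
    have := Real.rpow_pos_of_pos (by linarith : 0 < 1 + s) p
    have := Real.rpow_nonneg (by linarith : 0 ≤ 1 - s) p
    linarith
  have hp0 : p ≠ 0 := by linarith
  -- derivative of G
  have dG : ∀ s : ℝ, 0 ≤ s → s < 1 →
      HasDerivAt (fun t : ℝ => (((1+t)^p + (1-t)^p)/2) ^ (2/p))
        ((((1+s)^p + (1-s)^p)/2) ^ (2/p - 1) * ((1+s)^(p-1) - (1-s)^(p-1))) s := by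
    intro s h0 h1
    refine ((aux_dF p s (by linarith) h1).rpow_const (p := 2/p)
      (Or.inl (Fpos s h0 h1.le).ne')).congr_deriv ?_
    field_simp
  have dG2 : ∀ s : ℝ, 0 ≤ s → s < 1 →
      HasDerivAt (fun s : ℝ => 2 * (p-1) * s -
        (((1+s)^p + (1-s)^p)/2) ^ (2/p - 1) * ((1+s)^(p-1) - (1-s)^(p-1)))
        (2 * (p-1) - ((p / 2 * ((1+s)^(p-1) - (1-s)^(p-1))) * (2/p-1) *
          (((1+s)^p + (1-s)^p)/2) ^ (2/p - 1 - 1) * ((1+s)^(p-1) - (1-s)^(p-1)) +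
          (((1+s)^p + (1-s)^p)/2) ^ (2/p - 1) *
          ((p - 1) * ((1+s)^(p-2) + (1-s)^(p-2))))) s := by
    intro s h0 h1
    have h := ((aux_dF p s (by linarith) h1).rpow_const (p := 2/p-1)
      (Or.inl (Fpos s h0 h1.le).ne')).mul (aux_dD p s (by linarith) h1)
    have h3 := ((hasDerivAt_id s).const_mul (2*(p-1))).sub h
    refine h3.congr_deriv ?_
    ring
  have hK : ∀ s : ℝ, 0 ≤ s → s < 1 → 0 ≤ 2 * (p-1) * s -
        (((1+s)^p + (1-s)^p)/2) ^ (2/p - 1) * ((1+s)^(p-1) - (1-s)^(p-1)) := by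
    intro s h0 h1
    have mono : MonotoneOn (fun s : ℝ => 2 * (p-1) * s -
        (((1+s)^p + (1-s)^p)/2) ^ (2/p - 1) * ((1+s)^(p-1) - (1-s)^(p-1))) (Set.Ico 0 1) := by
      apply monotoneOn_of_hasDerivWithinAt_nonneg (convex_Ico 0 1)
        (fun s hs => (dG2 s hs.1 hs.2).continuousAt.continuousWithinAt)
        (fun s hs => (dG2 s (interior_subset hs).1 (interior_subset hs).2).hasDerivWithinAt)
      intro s hs
      obtain ⟨h0, h1⟩ := interior_subset hs
      have F0 := Fpos s h0 h1.le
      have pm := aux_powmean p hp (1+s) (1-s) (by linarith) (by linarith)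
      set F := ((1+s)^p + (1-s)^p)/2
      set D := (1+s)^(p-1) - (1-s)^(p-1)
      set E := (1+s)^(p-2) + (1-s)^(p-2)
      have e1 : F ^ (2/p-1) * F ^ (1-2/p) = 1 := by
        rw [← Real.rpow_add F0]; simp
      have e2 : F ^ (2/p-1) * (E/2) ≤ 1 := by
        exact (mul_le_mul_of_nonneg_left pm (Real.rpow_nonneg F0.le _)).trans e1.le
      have e3 : (p / 2 * D) * (2/p-1) * F ^ (2/p-1-1) * D ≤ 0 := by
        have : (p / 2 * D) * (2/p-1) * F ^ (2/p-1-1) * D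
          = - ((p-2)/2 * (D^2 * F ^ (2/p-1-1))) := by field_simp; ring
        rw [this, neg_nonpos]
        have : 0 ≤ F ^ (2/p-1-1) := Real.rpow_nonneg F0.le _
        have : 0 ≤ p - 2 := by linarith
        positivity
      have e4 : F ^ (2/p-1) * ((p-1) * E) ≤ 2 * (p-1) := by
        have : F ^ (2/p-1) * ((p-1) * E) = 2 * (p-1) * (F ^ (2/p-1) * (E/2)) := by ring
        rw [this]
        exact mul_le_of_le_one_right (by linarith) e2
      linarith
    have := mono (Set.mem_Ico.2 ⟨le_rfl, one_pos⟩) (Set.mem_Ico.2 ⟨h0, h1⟩) h0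
    simpa using this
  have mono : MonotoneOn (fun s : ℝ => 1 + (p-1) * s^2 - (((1+s)^p + (1-s)^p)/2) ^ (2/p))
      (Set.Icc 0 1) := by
    apply monotoneOn_of_hasDerivWithinAt_nonneg (convex_Icc 0 1)
      (f' := fun s => 2 * (p-1) * s -
        (((1+s)^p + (1-s)^p)/2) ^ (2/p - 1) * ((1+s)^(p-1) - (1-s)^(p-1)))
    · apply Continuous.continuousOn
      have c1 : Continuous (fun s : ℝ => (1+s)^p) :=
        (continuous_const.add continuous_id).rpow_const (fun _ => Or.inr (by linarith))
      have c2 : Continuous (fun s : ℝ => (1-s)^p) :=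
        (continuous_const.sub continuous_id).rpow_const (fun _ => Or.inr (by linarith))
      have c3 := ((c1.add c2).div_const 2).rpow_const (p := 2/p)
        (fun _ => Or.inr (by positivity))
      exact (by fun_prop : Continuous fun s : ℝ => 1 + (p-1) * s^2).sub c3
    · intro s hs
      rw [interior_Icc] at hs
      refine (HasDerivAt.congr_deriv ((((hasDerivAt_id s).pow 2).const_mul (p-1)).const_add 1 |>.sub
        (dG s hs.1.le hs.2)) ?_).hasDerivWithinAt
      simp
      ring
    · intro s hs
      rw [interior_Icc] at hs
      exact hK s hs.1.le hs.2
  have := mono (Set.mem_Icc.2 ⟨le_rfl, zero_le_one⟩) (Set.mem_Icc.2 ⟨ht0, ht1⟩) ht0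
  simpa using this

lemma aux_ab (p : ℝ) (hp : 2 ≤ p) (a b : ℝ) (hb : 0 ≤ b) (hab : b ≤ a) :
    (a+b)^p + (a-b)^p ≤ 2 * (a^2 + (p-1)*b^2)^(p/2) := by
  rcases hp.eq_or_lt with rfl | hp
  · norm_num
    nlinarith
  rcases (hb.trans hab).eq_or_lt with h0 | h0
  · have : b = 0 := by linarith
    subst this
    subst h0
    have : p ≠ 0 := by linarith
    simp [Real.zero_rpow, this]
  have ht0 : 0 ≤ b / a := by positivity
  have ht1 : b / a ≤ 1 := by rw [div_le_one h0]; exact hab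
  have h := aux_one p hp _ ht0 ht1
  set t := b / a
  have hbt : b = a * t := by simp only [t]; field_simp
  have h1 : 0 ≤ ((1+t)^p + (1-t)^p)/2 := by
    have := Real.rpow_nonneg (by linarith : 0 ≤ 1 + t) p
    have := Real.rpow_nonneg (by linarith : 0 ≤ 1 - t) p
    linarith
  have h2 := Real.rpow_le_rpow (Real.rpow_nonneg h1 _) h (by linarith : 0 ≤ p / 2)
  rw [← Real.rpow_mul h1, show 2/p*(p/2) = 1 by field_simp, Real.rpow_one] at h2
  rw [hbt, show a + a * t = a * (1+t) by ring, show a - a * t = a * (1-t) by ring,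
    show a^2 + (p-1)*(a*t)^2 = a^2 * (1 + (p-1)*t^2) by ring,
    Real.mul_rpow h0.le (by linarith), Real.mul_rpow h0.le (by linarith),
    Real.mul_rpow (by positivity) (by nlinarith [sq_nonneg t]), ← Real.rpow_natCast a 2, ← Real.rpow_mul h0.le]
  rw [show ((2:ℕ):ℝ) * (p/2) = p by push_cast; ring]
  have := mul_le_mul_of_nonneg_left h2 (Real.rpow_nonneg h0.le p)
  linarith

lemma aux_ab' (p : ℝ) (hp : 2 ≤ p) (a b : ℝ) (ha : 0 ≤ a) (hb : 0 ≤ b) :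
    |a+b|^p + |a-b|^p ≤ 2 * (a^2 + (p-1)*b^2)^(p/2) := by
  rcases le_total b a with h | h
  · rw [abs_of_nonneg (by linarith), abs_of_nonneg (by linarith)]
    exact aux_ab p hp a b hb h
  · rw [abs_of_nonneg (by linarith), abs_of_nonpos (by linarith), neg_sub, add_comm a b]
    refine (aux_ab p hp b a ha h).trans ?_
    have : b^2 + (p-1)*a^2 ≤ a^2 + (p-1)*b^2 := by
      have h7 : a^2 ≤ b^2 := by nlinarith
      nlinarith
    have h3 : 0 ≤ b^2 + (p-1)*a^2 := by nlinarith [sq_nonneg a, sq_nonneg b]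
    have := Real.rpow_le_rpow h3 this (by linarith : 0 ≤ p/2)
    linarith

lemma aux_conv (q : ℝ) (hq : 1 ≤ q) (S s r : ℝ) (h1 : |s| ≤ r) (h2 : r ≤ S) :
    (S+s)^q + (S-s)^q ≤ (S+r)^q + (S-r)^q := by
  obtain ⟨h3, h4⟩ := abs_le.1 h1
  rcases (le_trans (abs_nonneg s) h1).eq_or_lt with h0 | h0
  · have : s = 0 := by linarith
    subst this; subst h0; rfl
  have hc := convexOn_rpow hq
  have m1 : S + r ∈ Set.Ici (0:ℝ) := by simp; linarith
  have m2 : S - r ∈ Set.Ici (0:ℝ) := by simp; linarith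
  have n1 : 0 ≤ (r+s)/(2*r) := div_nonneg (by linarith) (by linarith)
  have n2 : 0 ≤ (r-s)/(2*r) := div_nonneg (by linarith) (by linarith)
  have e : (r+s)/(2*r) + (r-s)/(2*r) = 1 := by field_simp; ring
  have a1 := hc.2 m1 m2 n1 n2 e
  have a2 := hc.2 m2 m1 n1 n2 e
  simp only [smul_eq_mul] at a1 a2
  rw [show (r+s)/(2*r) * (S+r) + (r-s)/(2*r) * (S-r) = S + s by field_simp; ring] at a1
  rw [show (r+s)/(2*r) * (S-r) + (r-s)/(2*r) * (S+r) = S - s by field_simp; ring] at a2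
  have : (r-s)/(2*r) = 1 - (r+s)/(2*r) := by linarith
  rw [this] at a1 a2
  linarith

lemma aux_complex (p : ℝ) (hp : 2 ≤ p) (u v : ℂ) :
    ‖u+v‖^p + ‖u-v‖^p ≤ 2 * (‖u‖^2 + (p-1)*‖v‖^2)^(p/2) := by
  refine le_trans ?_ (aux_ab' p hp ‖u‖ ‖v‖ (norm_nonneg _) (norm_nonneg _))
  have key : ∀ w : ℝ, 0 ≤ w → w^p = (w^2)^(p/2) := by
    intro w hw
    rw [← Real.rpow_natCast w 2, ← Real.rpow_mul hw]; congr 1; push_cast; ring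
  rw [key _ (norm_nonneg (u+v)), key _ (norm_nonneg (u-v)), key _ (abs_nonneg _),
    key _ (abs_nonneg (_ - _)), sq_abs, sq_abs, norm_add_sq_real, norm_sub_sq_real]
  have := aux_conv (p/2) (by linarith) (‖u‖^2+‖v‖^2) (2 * inner ℝ u v) (2 * (‖u‖*‖v‖))
    (by rw [abs_mul, abs_two]; linarith [abs_real_inner_le_norm u v])
    (by nlinarith [sq_nonneg (‖u‖-‖v‖)])
  rw [show ‖u‖^2 + 2 * inner ℝ u v + ‖v‖^2 = ‖u‖^2+‖v‖^2 + 2 * inner ℝ u v by ring,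
    show ‖u‖^2 - 2 * inner ℝ u v + ‖v‖^2 = ‖u‖^2+‖v‖^2 - 2 * inner ℝ u v by ring,
    show (‖u‖ + ‖v‖)^2 = ‖u‖^2+‖v‖^2 + 2 * (‖u‖*‖v‖) by ring,
    show (‖u‖ - ‖v‖)^2 = ‖u‖^2+‖v‖^2 - 2 * (‖u‖*‖v‖) by ring]
  exact this

lemma aux_enn (p : ℝ) (hp : 2 ≤ p) (u v : ℂ) :
    ‖u+v‖ₑ^p + ‖u-v‖ₑ^p ≤
      2 * (‖u‖ₑ^(2:ℝ) + ENNReal.ofReal (p-1) * ‖v‖ₑ^(2:ℝ))^(p/2) := by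
  have h := ENNReal.ofReal_le_ofReal (aux_complex p hp u v)
  have h1 : 0 ≤ p - 1 := by linarith
  rw [ENNReal.ofReal_add (by positivity) (by positivity),
    ENNReal.ofReal_mul (by norm_num), ← ENNReal.ofReal_rpow_of_nonneg (by positivity) (by linarith),
    ← ENNReal.ofReal_rpow_of_nonneg (by positivity) (by linarith),
    ← ENNReal.ofReal_rpow_of_nonneg (by positivity) (by linarith),
    ENNReal.ofReal_add (by positivity) (by positivity), ENNReal.ofReal_mul h1,
    ENNReal.ofReal_pow (by positivity), ENNReal.ofReal_pow (by positivity)] at h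
  simpa [ofReal_norm] using h

lemma aux_norm {α : Type*} [MeasurableSpace α] (μ : Measure α)
    (p : ℝ) (hp2 : 2 ≤ p) (x : Lp ℂ (ENNReal.ofReal p) μ) :
    ENNReal.ofReal ‖x‖ = (∫⁻ a, ‖x a‖ₑ ^ p ∂μ) ^ (1/p) := by
  rw [Lp.norm_def, ENNReal.ofReal_toReal (Lp.eLpNorm_ne_top x),
    eLpNorm_eq_lintegral_rpow_enorm_toReal (by simp; linarith) (by simp),
    ENNReal.toReal_ofReal (by linarith)]

lemma aux_norm' {α : Type*} [MeasurableSpace α] (μ : Measure α)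
    (p : ℝ) [Fact (1 ≤ ENNReal.ofReal p)] (hp2 : 2 ≤ p) (x : Lp ℂ (ENNReal.ofReal p) μ) :
    (∫⁻ a, ‖x a‖ₑ ^ p ∂μ) = ENNReal.ofReal (‖x‖ ^ p) := by
  rw [← ENNReal.ofReal_rpow_of_nonneg (norm_nonneg _) (by linarith), aux_norm μ p hp2,
    ← ENNReal.rpow_mul, one_div, inv_mul_cancel₀ (by linarith), ENNReal.rpow_one]

lemma aux_smooth {α : Type*} [MeasurableSpace α] (μ : Measure α)
    (p : ℝ) [Fact (1 ≤ ENNReal.ofReal p)] (hp2 : 2 ≤ p) (x y : Lp ℂ (ENNReal.ofReal p) μ) :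
    ‖x + y‖ ^ 2 + ‖x - y‖ ^ 2 ≤ 2 * (‖x‖ ^ 2 + (p - 1) * ‖y‖ ^ 2) := by
  have hp0 : p ≠ 0 := by linarith
  have h1 : 0 ≤ p - 1 := by linarith
  have mx : AEMeasurable (fun a => ‖x a‖ₑ) μ := (Lp.aestronglyMeasurable x).enorm
  have my : AEMeasurable (fun a => ‖y a‖ₑ) μ := (Lp.aestronglyMeasurable y).enorm
  have mxy : AEMeasurable (fun a => ‖(x + y) a‖ₑ) μ := (Lp.aestronglyMeasurable (x+y)).enorm
  have s1 : (∫⁻ a, ‖(x+y) a‖ₑ ^ p ∂μ) + (∫⁻ a, ‖(x-y) a‖ₑ ^ p ∂μ) ≤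
      2 * ∫⁻ a, (‖x a‖ₑ^(2:ℝ) + ENNReal.ofReal (p-1) * ‖y a‖ₑ^(2:ℝ))^(p/2) ∂μ := by
    rw [← lintegral_add_left' (mxy.pow_const p), ← lintegral_const_mul' _ _ (by simp)]
    apply lintegral_mono_ae
    filter_upwards [Lp.coeFn_add x y, Lp.coeFn_sub x y] with a ha hb
    rw [ha, hb]
    exact aux_enn p hp2 _ _
  have key : ∀ z : Lp ℂ (ENNReal.ofReal p) μ,
      (∫⁻ a, (‖z a‖ₑ^(2:ℝ))^(p/2) ∂μ) ^ (1/(p/2)) = ENNReal.ofReal (‖z‖^2) := by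
    intro z
    simp_rw [← ENNReal.rpow_mul]
    rw [show 2 * (p/2) = p by ring, aux_norm' μ p hp2,
      ENNReal.ofReal_rpow_of_nonneg (by positivity) (by positivity),
      ← Real.rpow_mul (norm_nonneg _), show p * (1/(p/2)) = ((2:ℕ):ℝ) by push_cast; field_simp,
      Real.rpow_natCast]
  have s2 := ENNReal.lintegral_Lp_add_le (p := p/2) (mx.pow_const (2:ℝ))
    ((my.pow_const (2:ℝ)).const_mul (ENNReal.ofReal (p-1))) (by linarith)
  have key2 : (∫⁻ a, (ENNReal.ofReal (p-1) * ‖y a‖ₑ^(2:ℝ))^(p/2) ∂μ) ^ (1/(p/2))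
      = ENNReal.ofReal ((p-1) * ‖y‖^2) := by
    simp_rw [ENNReal.mul_rpow_of_nonneg _ _ (by linarith : 0 ≤ p/2)]
    rw [lintegral_const_mul' _ _ (by simp [ENNReal.rpow_eq_top_iff]; intro _; linarith), ENNReal.mul_rpow_of_nonneg _ _ (by positivity),
      key, ENNReal.ofReal_mul h1, ← ENNReal.rpow_mul,
      show p/2 * (1/(p/2)) = 1 by field_simp, ENNReal.rpow_one]
  simp only [Pi.add_apply] at s2
  rw [key, key2, ← ENNReal.ofReal_add (by positivity) (by positivity)] at s2
  set R := ‖x‖ ^ 2 + (p - 1) * ‖y‖ ^ 2 with hR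
  have hR0 : 0 ≤ R := by positivity
  have s3 := ENNReal.rpow_le_rpow s2 (by linarith : 0 ≤ p/2)
  rw [← ENNReal.rpow_mul, show 1/(p/2) * (p/2) = 1 by field_simp, ENNReal.rpow_one,
    ENNReal.ofReal_rpow_of_nonneg hR0 (by linarith)] at s3
  rw [aux_norm' μ p hp2, aux_norm' μ p hp2, ← ENNReal.ofReal_add (by positivity) (by positivity)]
    at s1
  have s4 := s1.trans (mul_le_mul_right s3 2)
  rw [show (2:ENNReal) = ENNReal.ofReal 2 by simp, ← ENNReal.ofReal_mul (by norm_num),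
    ENNReal.ofReal_le_ofReal_iff (by positivity)] at s4
  have kr : ∀ w : ℝ, 0 ≤ w → w^p = (w^2)^(p/2) := by
    intro w hw
    rw [← Real.rpow_natCast w 2, ← Real.rpow_mul hw]; congr 1; push_cast; ring
  rw [kr _ (norm_nonneg _), kr _ (norm_nonneg (x - y))] at s4
  have h := (convexOn_rpow (by linarith : 1 ≤ p/2)).2 (Set.mem_Ici.2 (sq_nonneg ‖x+y‖))
    (Set.mem_Ici.2 (sq_nonneg ‖x-y‖)) (by norm_num : (0:ℝ) ≤ 1/2)
    (by norm_num : (0:ℝ) ≤ 1/2) (by norm_num)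
  simp only [smul_eq_mul] at h
  have h5 : (1/2 * ‖x+y‖^2 + 1/2 * ‖x-y‖^2)^(p/2) ≤ R^(p/2) := by linarith
  rw [Real.rpow_le_rpow_iff (by positivity) hR0 (by linarith)] at h5
  linarith

/-- Upper Pythagorean inequality for `2 ≤ p < ∞`: if `x` is Birkhoff–James orthogonal to `y`
in `L^p(μ)`, then `‖x + y‖² ≤ ‖x‖² + (p − 1)·‖y‖²`. -/
theorem pythag_upper_large_p {α : Type*} [MeasurableSpace α] (μ : Measure α)
    (p : ℝ) (hp2 : 2 ≤ p)
    (x y : Lp ℂ (ENNReal.ofReal p) μ)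
    (horth : ∀ β : ℂ, ‖x‖ ≤ ‖x + β • y‖) :
    ‖x + y‖ ^ 2 ≤ ‖x‖ ^ 2 + (p - 1) * ‖y‖ ^ 2 := by
  have : Fact (1 ≤ ENNReal.ofReal p) := ⟨by simp; linarith⟩
  set C := (p - 1) * ‖y‖ ^ 2 with hC
  have hn : ∀ z : Lp ℂ (ENNReal.ofReal p) μ, ∀ r : ℝ, ‖(r:ℂ) • z‖^2 = r^2 * ‖z‖^2 := by
    intro z r
    rw [norm_smul, mul_pow, Complex.norm_real, Real.norm_eq_abs, sq_abs]
  have mid : ∀ s t : ℝ, ‖x + ((s+t:ℝ):ℂ) • y‖^2 + ‖x + ((s-t:ℝ):ℂ) • y‖^2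
      ≤ 2 * (‖x + (s:ℂ) • y‖^2 + t^2 * C) := by
    intro s t
    have := aux_smooth μ p hp2 (x + (s:ℂ) • y) ((t:ℂ) • y)
    rw [hn] at this
    have e1 : x + ((s+t:ℝ):ℂ) • y = x + (s:ℂ) • y + (t:ℂ) • y := by
      push_cast; rw [add_smul, add_assoc]
    have e2 : x + ((s-t:ℝ):ℂ) • y = x + (s:ℂ) • y - (t:ℂ) • y := by
      push_cast; rw [sub_smul, add_sub_assoc]
    rw [e1, e2, hC]
    linarith
  have dy : ∀ n : ℕ, ‖x + y‖^2 - C - ‖x‖^2 ≤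
      2^n * (‖x + (((1/2)^n:ℝ):ℂ) • y‖^2 - ((1/2)^n)^2 * C - ‖x‖^2) := by
    intro n
    induction n with
    | zero => simp
    | succ n ih =>
      refine ih.trans ?_
      have := mid ((1/2)^(n+1)) ((1/2)^(n+1))
      rw [show (1/2:ℝ)^(n+1) + (1/2)^(n+1) = (1/2)^n by ring, sub_self] at this
      simp only [Complex.ofReal_zero, zero_smul, add_zero] at this
      rw [pow_succ 2 n, mul_assoc]
      apply mul_le_mul_of_nonneg_left _ (by positivity)
      have e : ((1/2:ℝ)^n)^2 = 4 * ((1/2)^(n+1))^2 := by ring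
      rw [e]
      linarith
  have bd : ∀ n : ℕ, ‖x + y‖^2 - C - ‖x‖^2 ≤ (1/2)^n * C := by
    intro n
    refine (dy n).trans ?_
    have h := mid 0 ((1/2)^n)
    rw [zero_add, zero_sub] at h
    simp only [Complex.ofReal_zero, zero_smul, add_zero] at h
    have h2 := pow_le_pow_left₀ (norm_nonneg x) (horth ((-(1/2)^n : ℝ) : ℂ)) 2
    have e : (1/2:ℝ)^n * C = 2^n * (((1/2)^n)^2 * C) := by
      have : (2:ℝ)^n * (1/2)^n = 1 := by rw [← mul_pow]; norm_num
      linear_combination (-(1/2)^n * C) * this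
    rw [e]
    apply mul_le_mul_of_nonneg_left _ (by positivity)
    linarith
  have lim : Filter.Tendsto (fun n : ℕ => (1/2:ℝ)^n * C) Filter.atTop (nhds (0 * C)) :=
    (tendsto_pow_atTop_nhds_zero_of_lt_one (by norm_num) (by norm_num)).mul_const C
  have := ge_of_tendsto' lim bd
  linarith
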